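/- For every integer n ≥ 1, ∑_{π ∈ D_n} (-1)^{inv(π)} t^{exc(π)} = (-1)^{n-1}(t + t^2 + ⋯ + t^{n-1}) as an identity of polynomials in the variable t. -/

import Mathlib

open Finset MvPolynomial

/-- Number of inversions of a permutation of `Fin n`
(pairs `p.1 < p.2` with `π p.1 > π p.2`). -/
def inversions {n : ℕ} (π : Equiv.Perm (Fin n)) : ℕ :=
  (Finset.univ.filter fun p : Fin n × Fin n => p.1 < p.2 ∧ π p.2 < π p.1).card

/-- Excedance indices of a permutation. -/
def EXCi {n : ℕ} (π : Equiv.Perm (Fin n)) : Finset (Fin n) :=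
  Finset.univ.filter fun i => i < π i

/-- Excedance values of a permutation. -/
def EXCv {n : ℕ} (π : Equiv.Perm (Fin n)) : Finset (Fin n) :=
  (EXCi π).image π

/-- Right-to-left minima indices of a permutation. -/
def RLMi {n : ℕ} (π : Equiv.Perm (Fin n)) : Finset (Fin n) :=
  Finset.univ.filter fun i => ∀ j, i < j → π i < π j

/-- Right-to-left minima values of a permutation. -/
def RLMv {n : ℕ} (π : Equiv.Perm (Fin n)) : Finset (Fin n) :=
  (RLMi π).image π

/-- The derangements of `Fin n`, i.e. permutations with no fixed point. -/
def derangementsF (n : ℕ) : Finset (Equiv.Perm (Fin n)) :=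
  Finset.univ.filter fun π => ∀ i, π i ≠ i

/-!
By Leibniz's formula the sum is the determinant of the matrix with `X` below the diagonal, `0` on
it and `1` above it. Adding a constant `s` to every entry of a matrix is a perturbation of rank at
most one, so it changes the determinant by an affine function of `s`. If the entries are `a` below,
`d` on and `b` above the diagonal, then `s = -a` and `s = -b` make the matrix triangular; these two
values determine the affine function, and its value at `s = 0` gives
`(b - a) * det = b * (d - a) ^ n - a * (d - b) ^ n`. Here `b - a = 1 - X` is not a zero divisor, and
dividing by it leaves a geometric sum.
-/

section RankOneUpdate

open Matrix

variable {m R : Type*} [Fintype m] [DecidableEq m] [CommRing R]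

theorem det_add_vecMulVec_eq_det_fromBlocks (A : Matrix m m R) (u v : m → R) :
    (A + vecMulVec u v).det =
      (fromBlocks 1 (-replicateRow Unit v) (replicateCol Unit u) A).det := by
  rw [det_fromBlocks_one₁₁, Matrix.mul_neg, sub_neg_eq_add, ← vecMulVec_eq]

theorem det_add_smul_vecMulVec (A : Matrix m m R) (u v : m → R) (s : R) :
    (A + s • vecMulVec u v).det = (1 - s) * A.det + s * (A + vecMulVec u v).det := by
  -- Bordering `A` moves the update into a single column, in which the determinant is linear.
  let M (w : m → R) : Matrix (Unit ⊕ m) (Unit ⊕ m) R :=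
    fromBlocks 1 (-replicateRow Unit v) (replicateCol Unit w) A
  let c (w : m → R) : Unit ⊕ m → R := Sum.elim 1 w
  have hM (w : m → R) : M w = (M 0).updateCol (.inl ()) (c w) := by
    ext i j
    rcases i with _ | i <;> rcases j with _ | j <;> simp [M, c]
  have hc : c (s • u) = (1 - s) • c 0 + s • c u := by
    ext (_ | i) <;> simp [c]
  have hdet : (M (s • u)).det = (1 - s) * (M 0).det + s * (M u).det := by
    rw [hM (s • u), hc, det_updateCol_add, det_updateCol_smul, det_updateCol_smul, ← hM, ← hM]
  simpa only [M, ← det_add_vecMulVec_eq_det_fromBlocks, smul_vecMulVec, zero_vecMulVec, add_zero]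
    using hdet

theorem sub_mul_det_eq_of_add_smul_vecMulVec (A : Matrix m m R) (u v : m → R) (s t : R) :
    (t - s) * A.det =
      t * (A + s • vecMulVec u v).det - s * (A + t • vecMulVec u v).det := by
  rw [det_add_smul_vecMulVec A u v s, det_add_smul_vecMulVec A u v t]
  ring

end RankOneUpdate

section CmpMatrix

open Matrix

variable {m R : Type*} [LinearOrder m]

/-- The matrix with entry `a` below, `d` on and `b` above the diagonal. With `a = X`, `d = 0` and
`b = 1` its determinant enumerates the derangements by sign and number of excedances. -/
def cmpMatrix (a d b : R) : Matrix m m R :=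
  of fun i j => if j < i then a else if i < j then b else d

variable [CommRing R]

theorem cmpMatrix_add_smul_vecMulVec_one (a d b s : R) :
    cmpMatrix a d b + s • vecMulVec 1 1 =
      (cmpMatrix (a + s) (d + s) (b + s) : Matrix m m R) := by
  ext i j
  simp only [cmpMatrix, Matrix.add_apply, Matrix.smul_apply, vecMulVec_apply, of_apply,
    Pi.one_apply, mul_one, smul_eq_mul]
  split_ifs <;> rfl

variable [Fintype m]

theorem det_cmpMatrix_zero_left (d b : R) :
    (cmpMatrix 0 d b : Matrix m m R).det = d ^ Fintype.card m := by
  rw [det_of_isUpperTriangular fun i j hij => by simp_all [cmpMatrix]]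
  simp [cmpMatrix]

theorem det_cmpMatrix_zero_right (a d : R) :
    (cmpMatrix a d 0 : Matrix m m R).det = d ^ Fintype.card m := by
  rw [det_of_isLowerTriangular _ fun i j hij => by simp_all [cmpMatrix, le_of_lt]]
  simp [cmpMatrix]

theorem sub_mul_det_cmpMatrix (a d b : R) :
    (b - a) * (cmpMatrix a d b : Matrix m m R).det =
      b * (d - a) ^ Fintype.card m - a * (d - b) ^ Fintype.card m := by
  have h := sub_mul_det_eq_of_add_smul_vecMulVec (cmpMatrix a d b : Matrix m m R) 1 1 (-a) (-b)
  simp only [cmpMatrix_add_smul_vecMulVec_one, add_neg_cancel, det_cmpMatrix_zero_left,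
    det_cmpMatrix_zero_right, ← sub_eq_add_neg] at h
  linear_combination -h

end CmpMatrix

section SignedExcedanceSum

variable {n : ℕ} {R : Type*}

theorem sign_eq_neg_one_pow_inversions (π : Equiv.Perm (Fin n)) :
    Equiv.Perm.sign π = (-1) ^ inversions π := by
  rw [Equiv.Perm.sign_eq_prod_prod_Ioi, inversions, ← prod_const, prod_filter,
    ← univ_product_univ, prod_product]
  refine prod_congr rfl fun i _ => ?_
  rw [← filter_lt_eq_Ioi, prod_filter]
  refine prod_congr rfl fun j _ => ?_
  have hne : i < j → π i ≠ π j := fun hij => π.injective.ne hij.ne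
  grind

theorem prod_cmpMatrix_apply_perm [CommMonoidWithZero R] (t : R) (π : Equiv.Perm (Fin n)) :
    ∏ i, cmpMatrix t 0 1 (π i) i = if π ∈ derangementsF n then t ^ #(EXCi π) else 0 := by
  simp only [derangementsF, mem_filter_univ]
  split_ifs with hπ
  · rw [EXCi, ← prod_const, prod_filter]
    refine prod_congr rfl fun i _ => ?_
    have hne := hπ i
    simp only [cmpMatrix, Matrix.of_apply]
    grind
  · obtain ⟨i, hi⟩ := not_forall_not.mp hπ
    exact prod_eq_zero (mem_univ i) (by simp [cmpMatrix, hi])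

theorem sum_derangementsF_eq_det_cmpMatrix [CommRing R] (n : ℕ) (t : R) :
    ∑ π ∈ derangementsF n, (-1) ^ inversions π * t ^ #(EXCi π) =
      (cmpMatrix t 0 1 : Matrix (Fin n) (Fin n) R).det := by
  simp [Matrix.det_apply', prod_cmpMatrix_apply_perm, sign_eq_neg_one_pow_inversions]

theorem one_sub_mul_sum_derangementsF [CommRing R] (n : ℕ) (t : R) :
    (1 - t) * ∑ π ∈ derangementsF n, (-1) ^ inversions π * t ^ #(EXCi π) =
      (-t) ^ n - t * (-1) ^ n := by
  simpa [sum_derangementsF_eq_det_cmpMatrix] using sub_mul_det_cmpMatrix (m := Fin n) t 0 1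

end SignedExcedanceSum

theorem stmt2_general {R : Type*} [CommRing R] (n : ℕ) (hn : 1 ≤ n) :
    ∑ π ∈ derangementsF n,
      ((-1 : Polynomial R) ^ inversions π) * Polynomial.X ^ (EXCi π).card
    = (-1) ^ (n - 1) * ∑ k ∈ Finset.Icc 1 (n - 1), (Polynomial.X : Polynomial R) ^ k := by
  obtain ⟨m, rfl⟩ := Nat.exists_eq_add_of_le' hn
  have hreg : IsLeftRegular (Polynomial.X - 1 : Polynomial R) := by
    simpa only [map_one] using (Polynomial.monic_X_sub_C (1 : R)).isRegular.left
  have hsum := one_sub_mul_sum_derangementsF (m + 1) (Polynomial.X : Polynomial R)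
  have hgeom : (Polynomial.X - 1) * ∑ k ∈ Icc 1 m, (Polynomial.X : Polynomial R) ^ k =
      Polynomial.X ^ (m + 1) - Polynomial.X ^ 1 := by
    rw [mul_comm]
    exact geom_sum_Ico_mul _ hn
  refine hreg ?_
  rw [neg_pow] at hsum
  simp only [Nat.add_sub_cancel]
  linear_combination -hsum - (-1) ^ m * hgeom

theorem stmt2 (n : ℕ) (hn : 1 ≤ n) :
    ∑ π ∈ derangementsF n,
      ((-1 : Polynomial ℤ) ^ inversions π) * Polynomial.X ^ (EXCi π).card
    = (-1) ^ (n - 1) * ∑ k ∈ Finset.Icc 1 (n - 1), (Polynomial.X : Polynomial ℤ) ^ k :=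
  stmt2_general n hn
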